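/- Let μ_x, μ_y and μ_s be compactly supported probability measures on ℝ. Let Π be the set of probability measures π on ℝ² such that the pushforward of π under (x,y) ↦ x equals μ_x, the pushforward under (x,y) ↦ y equals μ_y, and the pushforward under (x,y) ↦ x + y equals μ_s. Assume Π is nonempty and let π ∈ Π be an extreme point of Π, i.e., whenever π₁, π₂ ∈ Π and π = (1/2)·π₁ + (1/2)·π₂, then π₁ = π₂ = π. Then there exists a Borel set S ⊆ ℝ² of two-dimensional Lebesgue measure zero with π(S) = 1; in other words, π is singular with respect to two-dimensional Lebesgue measure. -/

import Mathlib

open Set MeasureTheory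

/-- The set of probability measures on `ℝ²` with first marginal `μx`, second marginal `μy`,
and pushforward under `(x, y) ↦ x + y` equal to `μs`. -/
def PlanSet (μx μy μs : Measure ℝ) : Set (Measure (ℝ × ℝ)) :=
  {π | IsProbabilityMeasure π ∧ π.map Prod.fst = μx ∧ π.map Prod.snd = μy ∧
    π.map (fun p => p.1 + p.2) = μs}

/-!
Two distinct measures dominated by `π` and having the same images under all the projections can be
exchanged inside `π` in either direction, which exhibits `π` as a midpoint of two other measures
with its images; so an extreme point dominates no such pair. If `π` is not singular, it dominates
a positive multiple of Lebesgue measure on a non-null set `A`, and there such a pair is built one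
projection at a time: starting from a pair `(P, Q)` adapted to the previous projections and
carried by the points of `A` that a small vector `v` in the kernel of the next projection
keeps in `A`, pass to `(P + τQ, Q + τP)` with `τ` the translation by `v`. The new projection does
not see `τ`, and the pair stays distinct because a finite signed measure invariant under a
nontrivial translation vanishes.
-/

open Bornology Filter Function
open scoped ENNReal Topology

/-- The measures whose image under each map `L i` is `ν i`. `PlanSet` is the case of the two
coordinates and their sum; total mass is not prescribed, since any single image determines it. -/
def measuresWithImages {ι E : Type*} {F : ι → Type*} [MeasurableSpace E]
    [∀ i, MeasurableSpace (F i)] (L : ∀ i, E → F i) (ν : ∀ i, Measure (F i)) : Set (Measure E) :=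
  {π | ∀ i, π.map (L i) = ν i}

section Extreme

variable {ι E : Type*} {F : ι → Type*} [MeasurableSpace E] [∀ i, MeasurableSpace (F i)]
  {L : ∀ i, E → F i} {ν : ∀ i, Measure (F i)} {π P Q : Measure E}

lemma sub_add_mem_measuresWithImages [IsFiniteMeasure Q] (hL : ∀ i, Measurable (L i))
    (hπ : π ∈ measuresWithImages L ν) (hQ : Q ≤ π) (hPQ : ∀ i, P.map (L i) = Q.map (L i)) :
    π - Q + P ∈ measuresWithImages L ν := fun i => by
  rw [Measure.map_add _ _ (hL i), hPQ i, ← Measure.map_add _ _ (hL i),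
    Measure.sub_add_cancel_of_le hQ, hπ i]

lemma eq_of_le_of_extreme_measuresWithImages [SigmaFinite π] [IsFiniteMeasure P]
    [IsFiniteMeasure Q] (hL : ∀ i, Measurable (L i)) (hπ : π ∈ measuresWithImages L ν)
    (hext : ∀ π₁ ∈ measuresWithImages L ν, ∀ π₂ ∈ measuresWithImages L ν,
      π = (2 : ℝ≥0∞)⁻¹ • π₁ + (2 : ℝ≥0∞)⁻¹ • π₂ → π₁ = π ∧ π₂ = π)
    (hP : P ≤ π) (hQ : Q ≤ π) (hPQ : ∀ i, P.map (L i) = Q.map (L i)) : P = Q := by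
  have hsum : (π - Q + P) + (π - P + Q) = π + π := by
    rw [add_add_add_comm, add_comm P Q, add_add_add_comm, Measure.sub_add_cancel_of_le hP,
      Measure.sub_add_cancel_of_le hQ]
  have hmid : π = (2 : ℝ≥0∞)⁻¹ • (π - Q + P) + (2 : ℝ≥0∞)⁻¹ • (π - P + Q) := by
    rw [← smul_add, hsum, smul_add, ← add_smul, ENNReal.inv_two_add_inv_two, one_smul]
  have heq : π - Q + P = π :=
    (hext _ (sub_add_mem_measuresWithImages hL hπ hQ hPQ) _
      (sub_add_mem_measuresWithImages hL hπ hP fun i => (hPQ i).symm) hmid).1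
  have : SigmaFinite (π - Q) := Measure.sigmaFinite_of_le π Measure.sub_le
  exact (Measure.add_right_inj (π - Q) P Q).1 (heq.trans (Measure.sub_add_cancel_of_le hQ).symm)

end Extreme

lemma exists_smul_restrict_le_of_not_mutuallySingular {α : Type*} [MeasurableSpace α]
    {μ ν : Measure α} [μ.HaveLebesgueDecomposition ν] (h : ¬ μ ⟂ₘ ν) :
    ∃ c : ℝ≥0∞, c ≠ 0 ∧ c ≠ ∞ ∧ ∃ A, MeasurableSet A ∧ ν A ≠ 0 ∧ c • ν.restrict A ≤ μ := by
  have hpos : ∃ n : ℕ, ν {x | (n + 1 : ℝ≥0∞)⁻¹ ≤ μ.rnDeriv ν x} ≠ 0 := by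
    contrapose! h
    have hlt : ∀ᵐ x ∂ν, ∀ n : ℕ, ¬ (n + 1 : ℝ≥0∞)⁻¹ ≤ μ.rnDeriv ν x :=
      ae_all_iff.2 fun n => by simpa only [ae_iff, not_not] using h n
    refine (Measure.rnDeriv_eq_zero μ ν).1 (hlt.mono fun x hx => ?_)
    by_contra hne
    obtain ⟨n, hn⟩ := ENNReal.exists_inv_nat_lt hne
    exact hx n ((ENNReal.inv_le_inv.2 le_self_add).trans hn.le)
  obtain ⟨n, hn⟩ := hpos
  set A := {x | (n + 1 : ℝ≥0∞)⁻¹ ≤ μ.rnDeriv ν x}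
  have hA : MeasurableSet A := measurableSet_le measurable_const (Measure.measurable_rnDeriv μ ν)
  refine ⟨(n + 1 : ℝ≥0∞)⁻¹, by simp, by simp, A, hA, hn, ?_⟩
  calc (n + 1 : ℝ≥0∞)⁻¹ • ν.restrict A
      = ν.withDensity (A.indicator fun _ => (n + 1 : ℝ≥0∞)⁻¹) := by
        rw [withDensity_indicator hA, withDensity_const]
    _ ≤ ν.withDensity (μ.rnDeriv ν) :=
        withDensity_mono (ae_of_all _ (indicator_le fun _ hx => hx))
    _ ≤ μ := Measure.withDensity_rnDeriv_le μ ν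

lemma map_map_add_left {G H M : Type*} [Add G] [MeasurableSpace G] [MeasurableAdd G] [Add H]
    [MeasurableSpace H] [MeasurableAdd H] [FunLike M G H] [AddHomClass M G H] {f : M}
    (hf : Measurable f) (m : Measure G) (v : G) :
    (m.map (v + ·)).map f = (m.map f).map (f v + ·) := by
  rw [Measure.map_map hf (measurable_const_add v), Measure.map_map (measurable_const_add _) hf]
  congr 1
  ext p
  exact map_add f v p

lemma map_add_map_add_left_eq {G H M : Type*} [Add G] [MeasurableSpace G] [MeasurableAdd G]
    [AddZeroClass H] [MeasurableSpace H] [MeasurableAdd H] [FunLike M G H] [AddHomClass M G H]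
    {f : M} (hf : Measurable f) {P Q : Measure G} {v : G}
    (h : f v = 0 ∨ P.map f = Q.map f) :
    (P + Q.map (v + ·)).map f = (Q + P.map (v + ·)).map f := by
  rw [Measure.map_add _ _ hf, Measure.map_add _ _ hf, map_map_add_left hf, map_map_add_left hf]
  rcases h with hv | hPQ
  · simp only [hv, zero_add, Measure.map_id']
    exact add_comm _ _
  · rw [hPQ]

lemma map_add_left_restrict_inter_le {G : Type*} [AddGroup G] [MeasurableSpace G]
    [MeasurableAdd G] (μ : Measure G) [μ.IsAddLeftInvariant] {A : Set G} (hA : MeasurableSet A)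
    (v : G) : (μ.restrict (A ∩ (v + ·) ⁻¹' A)).map (v + ·) ≤ μ.restrict A :=
  calc (μ.restrict (A ∩ (v + ·) ⁻¹' A)).map (v + ·)
      ≤ (μ.restrict ((v + ·) ⁻¹' A)).map (v + ·) :=
        Measure.map_mono (Measure.restrict_mono inter_subset_right le_rfl) (measurable_const_add v)
    _ = μ.restrict A := ((measurePreserving_add_left μ v).restrict_preimage hA).map_eq

lemma add_map_add_left_le_smul_restrict {G : Type*} [AddGroup G] [MeasurableSpace G]
    [MeasurableAdd G] {μ m₁ m₂ : Measure G} [μ.IsAddLeftInvariant] {c : ℝ≥0∞} {A : Set G}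
    (hA : MeasurableSet A) {v : G} (h₁ : m₁ ≤ (c / 2) • μ.restrict (A ∩ (v + ·) ⁻¹' A))
    (h₂ : m₂ ≤ (c / 2) • μ.restrict (A ∩ (v + ·) ⁻¹' A)) :
    m₁ + m₂.map (v + ·) ≤ c • μ.restrict A :=
  calc m₁ + m₂.map (v + ·)
      ≤ (c / 2) • μ.restrict (A ∩ (v + ·) ⁻¹' A) +
          ((c / 2) • μ.restrict (A ∩ (v + ·) ⁻¹' A)).map (v + ·) :=
        add_le_add h₁ (Measure.map_mono h₂ (measurable_const_add v))
    _ ≤ (c / 2) • μ.restrict A + (c / 2) • μ.restrict A := by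
        rw [Measure.map_smul]
        gcongr
        · exact inter_subset_left
        · exact map_add_left_restrict_inter_le μ hA v
    _ = c • μ.restrict A := by rw [← add_smul, ENNReal.add_halves]

open scoped Pointwise in
lemma eventually_measure_inter_preimage_add_left_ne_zero {G : Type*} [AddGroup G]
    [TopologicalSpace G] [IsTopologicalAddGroup G] [LocallyCompactSpace G] [T2Space G]
    [MeasurableSpace G] [BorelSpace G] (μ : Measure G) [μ.IsAddLeftInvariant]
    [IsFiniteMeasureOnCompacts μ] [μ.InnerRegular] {A : Set G} (hA : MeasurableSet A)
    (hμA : μ A ≠ 0) :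
    ∀ᶠ v in 𝓝 (0 : G), μ (A ∩ (v + ·) ⁻¹' A) ≠ 0 := by
  obtain ⟨K, hKA, hK, hμK⟩ := hA.exists_lt_isCompact (pos_iff_ne_zero.2 hμA)
  filter_upwards [(tendsto_measure_vadd_sdiff_isCompact_isClosed (μ := μ) hK
    hK.isClosed).eventually_lt_const hμK] with v hv hnull
  refine hv.not_ge ?_
  calc μ K ≤ μ (A ∩ (v + ·) ⁻¹' A ∪ (v + ·) ⁻¹' ((v +ᵥ K) \ K)) := by
        refine measure_mono fun p hp => ?_
        by_cases hvp : v + p ∈ K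
        · exact Or.inl ⟨hKA hp, hKA hvp⟩
        · exact Or.inr ⟨vadd_mem_vadd_set hp, hvp⟩
    _ ≤ μ (A ∩ (v + ·) ⁻¹' A) + μ ((v + ·) ⁻¹' ((v +ᵥ K) \ K)) := measure_union_le _ _
    _ = μ ((v +ᵥ K) \ K) := by rw [hnull, zero_add, measure_preimage_add]

lemma tendsto_nsmul_atTop_cobounded {E : Type*} [NormedAddCommGroup E] [NormedSpace ℝ E] {v : E}
    (hv : v ≠ 0) : Tendsto (fun n : ℕ => n • v) atTop (cobounded E) := by
  refine tendsto_norm_atTop_iff_cobounded.1 ?_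
  simp only [← Nat.cast_smul_eq_nsmul ℝ, norm_smul, Real.norm_natCast]
  exact tendsto_natCast_atTop_atTop.atTop_mul_const (norm_pos_iff.2 hv)

lemma tendsto_measure_preimage_add_left_cobounded {E : Type*} [SeminormedAddCommGroup E]
    [MeasurableSpace E] [MeasurableAdd E] (P : Measure E) [IsFiniteMeasure P] {s : Set E}
    (hs : MeasurableSet s) (hsb : IsBounded s) :
    Tendsto (fun w => P ((w + ·) ⁻¹' s)) (cobounded E) (𝓝 0) := by
  have : (cobounded E).IsCountablyGenerated := comap_norm_atTop (E := E) ▸ inferInstance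
  rw [← measure_empty (μ := P)]
  refine tendsto_measure_of_tendsto_indicator_of_isFiniteMeasure _ P
    (fun w => measurable_const_add w hs) fun x => ?_
  filter_upwards [tendsto_add_const_cobounded x (isBounded_def.1 hsb)] with w hw
  exact iff_of_false hw (notMem_empty x)

lemma eq_of_add_map_add_left_eq {E : Type*} [NormedAddCommGroup E] [NormedSpace ℝ E]
    [MeasurableSpace E] [BorelSpace E] {P Q : Measure E} [IsFiniteMeasure P] [IsFiniteMeasure Q]
    {v : E} (hv : v ≠ 0) (h : P + Q.map (v + ·) = Q + P.map (v + ·)) : P = Q := by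
  let D : Set E → ℝ := fun s => P.real s - Q.real s
  have hD_add : ∀ s, MeasurableSet s → D ((v + ·) ⁻¹' s) = D s := fun s hs => by
    have hs' : (P + Q.map (v + ·)).real s = (Q + P.map (v + ·)).real s := by rw [h]
    rw [measureReal_add_apply, measureReal_add_apply,
      map_measureReal_apply (measurable_const_add v) hs,
      map_measureReal_apply (measurable_const_add v) hs] at hs'
    simp only [D]
    linarith
  have hD_nsmul : ∀ (n : ℕ) s, MeasurableSet s → D ((n • v + ·) ⁻¹' s) = D s := by
    intro n s hs
    induction n with
    | zero => simp
    | succ n ih =>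
      rw [← ih, ← hD_add _ (measurable_const_add (n • v) hs)]
      simp only [succ_nsmul, preimage_preimage, add_assoc]
  have hD_zero : ∀ s, MeasurableSet s → IsBounded s → D s = 0 := fun s hs hsb => by
    have hlim (m : Measure E) [IsFiniteMeasure m] :
        Tendsto (fun n : ℕ => m.real ((n • v + ·) ⁻¹' s)) atTop (𝓝 0) :=
      (ENNReal.tendsto_toReal ENNReal.zero_ne_top).comp
        ((tendsto_measure_preimage_add_left_cobounded m hs hsb).comp
          (tendsto_nsmul_atTop_cobounded hv))
    have hconst := (hlim P).sub (hlim Q)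
    rw [sub_zero] at hconst
    exact tendsto_nhds_unique tendsto_const_nhds (hconst.congr fun n => hD_nsmul n s hs)
  refine Measure.ext_of_iUnion_eq_univ (Metric.iUnion_ball_nat (0 : E)) fun n =>
    Measure.ext fun s hs => ?_
  rw [Measure.restrict_apply hs, Measure.restrict_apply hs, ← measureReal_eq_measureReal_iff]
  exact sub_eq_zero.1 (hD_zero _ (hs.inter measurableSet_ball)
    (Metric.isBounded_ball.subset inter_subset_right))

section Singular

variable {ι E : Type*} {F : ι → Type*} [NormedAddCommGroup E] [NormedSpace ℝ E]
  [FiniteDimensional ℝ E] [MeasurableSpace E] [BorelSpace E] [∀ i, AddCommGroup (F i)]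
  [∀ i, Module ℝ (F i)] [∀ i, TopologicalSpace (F i)] [∀ i, ContinuousAdd (F i)]
  [∀ i, MeasurableSpace (F i)] [∀ i, BorelSpace (F i)] {L : ∀ i, E →L[ℝ] F i}

lemma exists_ne_zero_apply_eq_zero_measure_inter_ne_zero (μ : Measure E)
    [μ.IsAddHaarMeasure] {V : Type*} [AddCommGroup V] [Module ℝ V] {f : E →ₗ[ℝ] V}
    (hf : ¬ Injective f) {A : Set E} (hA : MeasurableSet A) (hμA : μ A ≠ 0) :
    ∃ v ≠ 0, f v = 0 ∧ μ (A ∩ (v + ·) ⁻¹' A) ≠ 0 := by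
  obtain ⟨u, hfu, hu⟩ : ∃ u, f u = 0 ∧ u ≠ 0 := by
    simpa only [injective_iff_map_eq_zero, not_forall, exists_prop] using hf
  have htend : Tendsto (fun t : ℝ => t • u) (𝓝[≠] 0) (𝓝 0) := by
    have hcont : Continuous fun t : ℝ => t • u := by fun_prop
    exact (hcont.tendsto' 0 0 (zero_smul ℝ u)).mono_left nhdsWithin_le_nhds
  obtain ⟨t, ht, ht0⟩ := ((htend.eventually
    (eventually_measure_inter_preimage_add_left_ne_zero μ hA hμA)).and self_mem_nhdsWithin).exists
  exact ⟨t • u, smul_ne_zero ht0 hu, by rw [map_smul, hfu, smul_zero], ht⟩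

lemma exists_ne_le_smul_restrict_forall_map_eq (μ : Measure E) [μ.IsAddHaarMeasure]
    (hL : ∀ i, ¬ Injective (L i)) (s : Finset ι) {c : ℝ≥0∞} (hc : c ≠ 0) (hc' : c ≠ ∞) {A : Set E}
    (hA : MeasurableSet A) (hμA : μ A ≠ 0) :
    ∃ P Q : Measure E, IsFiniteMeasure P ∧ IsFiniteMeasure Q ∧ P ≠ Q ∧
      P ≤ c • μ.restrict A ∧ Q ≤ c • μ.restrict A ∧ ∀ i ∈ s, P.map (L i) = Q.map (L i) := by
  classical
  induction s using Finset.induction_on generalizing c A with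
  | empty =>
    obtain ⟨B, -, hBA, hμB, hμB'⟩ :=
      Measure.exists_subset_measure_lt_top hA (pos_iff_ne_zero.2 hμA)
    have : IsFiniteMeasure (μ.restrict B) := isFiniteMeasure_restrict.2 hμB'.ne
    refine ⟨c • μ.restrict B, 0, Measure.smul_finite _ hc', inferInstance, ?_, ?_, ?_, by simp⟩
    · simp [hc, hμB.ne']
    · gcongr
    · exact Measure.zero_le _
  | insert j s _ ih =>
    obtain ⟨v, hv, hLv, hμv⟩ :=
      exists_ne_zero_apply_eq_zero_measure_inter_ne_zero μ
        (f := (L j).toLinearMap) (hL j) hA hμA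
    obtain ⟨P, Q, _, _, hne, hP, hQ, hPQ⟩ := ih (c := c / 2) (by simpa using hc)
      (ENNReal.div_ne_top hc' two_ne_zero) (hA.inter (measurable_const_add v hA)) hμv
    refine ⟨P + Q.map (v + ·), Q + P.map (v + ·), inferInstance, inferInstance,
      fun h => hne (eq_of_add_map_add_left_eq hv h), add_map_add_left_le_smul_restrict hA hP hQ,
      add_map_add_left_le_smul_restrict hA hQ hP, fun i hi => ?_⟩
    refine map_add_map_add_left_eq (L i).continuous.measurable ?_
    exact (Finset.mem_insert.1 hi).imp (by rintro rfl; exact hLv) (hPQ i)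

theorem extreme_point_singular_general [Finite ι] (μ : Measure E) [μ.IsAddHaarMeasure]
    (hL : ∀ i, ¬ Injective (L i)) (ν : ∀ i, Measure (F i)) (π : Measure E) [SigmaFinite π]
    (hπ : π ∈ measuresWithImages (fun i => L i) ν)
    (hext : ∀ π₁ ∈ measuresWithImages (fun i => L i) ν,
      ∀ π₂ ∈ measuresWithImages (fun i => L i) ν,
      π = (2 : ℝ≥0∞)⁻¹ • π₁ + (2 : ℝ≥0∞)⁻¹ • π₂ → π₁ = π ∧ π₂ = π) :
    π ⟂ₘ μ := by
  cases nonempty_fintype ι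
  by_contra hsing
  obtain ⟨c, hc, hc', A, hA, hμA, hAπ⟩ := exists_smul_restrict_le_of_not_mutuallySingular hsing
  obtain ⟨P, Q, _, _, hne, hP, hQ, hPQ⟩ :=
    exists_ne_le_smul_restrict_forall_map_eq μ hL Finset.univ hc hc' hA hμA
  exact hne (eq_of_le_of_extreme_measuresWithImages (fun i => (L i).continuous.measurable) hπ hext
    (hP.trans hAπ) (hQ.trans hAπ) fun i => hPQ i (Finset.mem_univ i))

end Singular

/-- The two coordinates and their sum, as a family of linear maps on the plane. -/
def planProjection : Fin 3 → ℝ × ℝ →L[ℝ] ℝ :=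
  ![.fst ℝ ℝ ℝ, .snd ℝ ℝ ℝ, .fst ℝ ℝ ℝ + .snd ℝ ℝ ℝ]

lemma not_injective_planProjection (i : Fin 3) : ¬ Injective (planProjection i) := by
  let v : Fin 3 → ℝ × ℝ := ![(0, 1), (1, 0), (1, -1)]
  have hv : planProjection i (v i) = planProjection i 0 := by
    fin_cases i <;> simp [planProjection, v]
  have hv0 : v i ≠ 0 := by
    fin_cases i <;> simp [v]
  exact fun h => hv0 (h hv)

lemma planSet_eq_measuresWithImages (μx μy μs : Measure ℝ) [IsProbabilityMeasure μx] :
    PlanSet μx μy μs = measuresWithImages (fun i => planProjection i) ![μx, μy, μs] := by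
  have hprob {π : Measure (ℝ × ℝ)} (h : π.map Prod.fst = μx) : IsProbabilityMeasure π := by
    have : IsProbabilityMeasure (π.map Prod.fst) := h ▸ inferInstance
    exact Measure.isProbabilityMeasure_of_map Prod.fst
  ext π
  have himage : π ∈ measuresWithImages (fun i => planProjection i) ![μx, μy, μs] ↔
      π.map Prod.fst = μx ∧ π.map Prod.snd = μy ∧ π.map (fun p => p.1 + p.2) = μs := by
    simp only [measuresWithImages, mem_ofPred_eq, Fin.forall_fin_succ, IsEmpty.forall_iff, and_true]
    rfl
  rw [himage]
  exact and_iff_right_of_imp fun h => hprob h.1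

/-- An extreme point of the set of probability measures on `ℝ²` with prescribed projections
onto the two axes and onto the diagonal (via `(x,y) ↦ x + y`), the three marginals being
compactly supported, is singular with respect to two-dimensional Lebesgue measure. -/
theorem extreme_point_singular (μx μy μs : Measure ℝ)
    [IsProbabilityMeasure μx] [IsProbabilityMeasure μy] [IsProbabilityMeasure μs]
    (hx : ∃ K : Set ℝ, IsCompact K ∧ μx Kᶜ = 0)
    (hy : ∃ K : Set ℝ, IsCompact K ∧ μy Kᶜ = 0)
    (hs : ∃ K : Set ℝ, IsCompact K ∧ μs Kᶜ = 0)
    (π : Measure (ℝ × ℝ)) (hπ : π ∈ PlanSet μx μy μs)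
    (hext : ∀ π₁ ∈ PlanSet μx μy μs, ∀ π₂ ∈ PlanSet μx μy μs,
      π = (2 : ENNReal)⁻¹ • π₁ + (2 : ENNReal)⁻¹ • π₂ → π₁ = π ∧ π₂ = π) :
    ∃ S : Set (ℝ × ℝ), MeasurableSet S ∧ volume S = 0 ∧ π S = 1 := by
  have := hπ.1
  rw [planSet_eq_measuresWithImages] at hπ hext
  obtain ⟨S, hS, hπS, hvol⟩ := extreme_point_singular_general volume
    not_injective_planProjection _ π hπ hext
  exact ⟨Sᶜ, hS.compl, hvol, (prob_compl_eq_one_iff hS).2 hπS⟩
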